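/- Let (A, τ, S, (A_I), (E_I)) be an A_0-valued white noise and let (c_t)_{t≥0} be a centred, norm-continuous additive cocycle for the shift S. Then for every t ≥ 0 and every partition 0 = s_0 < s_1 < … < s_n = t of [0, t], the conditional expectation of the discrete quadratic variation sum is exactly Σ_{j=0}^{n−1} E_0((c_{s_{j+1}} − c_{s_j})* (c_{s_{j+1}} − c_{s_j})) = t · E_0(c_1* c_1), independently of the partition. -/

import Mathlib

open scoped ComplexOrder

/-- A faithful tracial state on a unital C*-algebra. -/
structure IsTracialState {A : Type*} [CStarAlgebra A] (τ : A →ₗ[ℂ] ℂ) : Prop where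
  map_one : τ 1 = 1
  pos : ∀ x : A, 0 ≤ τ (star x * x)
  tracial : ∀ x y : A, τ (x * y) = τ (y * x)
  bounded : ∀ x : A, ‖τ x‖ ≤ ‖x‖
  faithful : ∀ x : A, τ (star x * x) = 0 → x = 0

/-- A (trace-preserving) conditional expectation onto a subset `B` of `A`. -/
structure IsCondExp {A : Type*} [CStarAlgebra A] (τ : A →ₗ[ℂ] ℂ) (B : Set A)
    (E : A →ₗ[ℂ] A) : Prop where
  mem_range : ∀ x, E x ∈ B
  map_of_mem : ∀ b ∈ B, E b = b
  bimodule : ∀ a ∈ B, ∀ c ∈ B, ∀ x, E (a * x * c) = a * E x * c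
  map_star : ∀ x, E (star x) = star (E x)
  contractive : ∀ x, ‖E x‖ ≤ ‖x‖
  trace_eq : ∀ x, τ (E x) = τ x

/-- An `A₀`-valued white noise `(A, τ, S, (A_I), (E_I))`.  The filtration is indexed by
closed intervals `[a, b]` of `ℝ` with (possibly infinite) endpoints `a b : EReal`. -/
structure WhiteNoise (A : Type*) [CStarAlgebra A] (τ : A →ₗ[ℂ] ℂ) where
  tracial : IsTracialState τ
  /-- the filtration algebra `A_{[a,b]}` -/
  alg : EReal → EReal → StarSubalgebra ℂ A
  alg_isClosed : ∀ a b, IsClosed (alg a b : Set A)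
  alg_mono : ∀ a b a' b' : EReal, a' ≤ a → b ≤ b' → (alg a b : Set A) ⊆ alg a' b'
  /-- the distinguished subalgebra `A₀` -/
  A0 : StarSubalgebra ℂ A
  A0_isClosed : IsClosed (A0 : Set A)
  A0_le : ∀ a b, (A0 : Set A) ⊆ alg a b
  /-- the conditional expectation `E_{[a,b]}` onto `A_{[a,b]}` -/
  E : EReal → EReal → (A →ₗ[ℂ] A)
  /-- the conditional expectation `E₀` onto `A₀` -/
  E0 : A →ₗ[ℂ] A
  E_condExp : ∀ a b, IsCondExp τ (alg a b) (E a b)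
  E0_condExp : IsCondExp τ A0 E0
  /-- the white noise shift: a one-parameter group of trace-preserving `*`-automorphisms -/
  S : ℝ → (A ≃⋆ₐ[ℂ] A)
  S_zero : ∀ x, S 0 x = x
  S_add : ∀ s t x, S (s + t) x = S s (S t x)
  S_trace : ∀ t x, τ (S t x) = τ x
  S_alg : ∀ (t : ℝ) (a b : EReal),
    (S t) '' (alg a b : Set A) = (alg (a + (t : EReal)) (b + (t : EReal)) : Set A)
  S_fix : ∀ t, ∀ a ∈ A0, S t a = a
  E0_S : ∀ t x, E0 (S t x) = E0 x
  /-- independence over `A₀`: `E_I ∘ E_J = E₀` whenever the interiors of `I`, `J` are disjoint -/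
  indep : ∀ a b c d : EReal,
    (∀ x : ℝ, ¬((a < (x : EReal) ∧ (x : EReal) < b) ∧ (c < (x : EReal) ∧ (x : EReal) < d))) →
    ∀ y, E a b (E c d y) = E0 y
  /-- the tower property `E₀ ∘ E_I = E₀` -/
  tower : ∀ (a b : EReal) (y : A), E0 (E a b y) = E0 y

/-! The increment `c t - c s` is the shift by `s` of `c (t - s)`, so the function
`f t = E₀(c_t* c_t)` determines the quadratic variation sum. Independence and centredness kill the
cross terms in `c (s + t) = S_t (c s) + c t`, hence `f` is additive on the half-line. It takes
positive values because `E₀` is a positive map, and a positive additive function on the half-line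
is monotone, hence linear. The sum then telescopes. -/

section OrderedTopologicalModule

variable {M : Type*} [AddCommMonoid M] [PartialOrder M] [Module ℝ M] [PosSMulMono ℝ M]
  [TopologicalSpace M] [ContinuousSMul ℝ M] [ClosedIciTopology M]

theorem nonpos_of_forall_nsmul_le {x y : M} (h : ∀ n : ℕ, n • x ≤ y) : x ≤ 0 := by
  have hle (n : ℕ) : x ≤ (1 / ((n : ℝ) + 1)) • y := by
    have := smul_le_smul_of_nonneg_left (h (n + 1)) (by positivity : 0 ≤ 1 / ((n : ℝ) + 1))
    rwa [← Nat.cast_smul_eq_nsmul ℝ, smul_smul, Nat.cast_succ, one_div_mul_cancel (by positivity),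
      one_smul] at this
  have hlim : Filter.Tendsto (fun n : ℕ ↦ (1 / ((n : ℝ) + 1)) • y) Filter.atTop (nhds 0) := by
    simpa only [zero_smul] using
      (tendsto_one_div_add_atTop_nhds_zero_nat (𝕜 := ℝ)).smul_const y
  exact ge_of_tendsto' hlim hle

end OrderedTopologicalModule

/-- Additivity on the half-line `[0, ∞)`; the values of `f` at negative reals are irrelevant. -/
def AdditiveOnNonneg {M : Type*} [Add M] (f : ℝ → M) : Prop :=
  ∀ ⦃s t : ℝ⦄, 0 ≤ s → 0 ≤ t → f (s + t) = f s + f t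

namespace AdditiveOnNonneg

variable {M : Type*} [AddCommGroup M] {f : ℝ → M}

theorem map_natCast_mul (hadd : AdditiveOnNonneg f) (n : ℕ) {t : ℝ} (ht : 0 ≤ t) :
    f (n * t) = n • f t := by
  induction n with
  | zero => simpa using hadd le_rfl le_rfl
  | succ n ih => rw [Nat.cast_succ, add_one_mul, hadd (by positivity) ht, ih, succ_nsmul]

theorem map_natCast (hadd : AdditiveOnNonneg f) (n : ℕ) : f n = n • f 1 := by
  simpa only [mul_one] using hadd.map_natCast_mul n zero_le_one

variable [PartialOrder M] [IsOrderedAddMonoid M]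

theorem monotoneOn (hadd : AdditiveOnNonneg f) (hnonneg : ∀ t, 0 ≤ t → 0 ≤ f t) :
    MonotoneOn f (Set.Ici 0) := by
  intro s hs t _ hst
  have hd : 0 ≤ t - s := sub_nonneg.mpr hst
  calc
    f s ≤ f (t - s) + f s := le_add_of_nonneg_left (hnonneg _ hd)
    _ = f t := by rw [← hadd hd hs, sub_add_cancel]

variable [Module ℝ M]

theorem le_smul_one_add [SMulPosMono ℝ M] (hadd : AdditiveOnNonneg f)
    (hnonneg : ∀ t, 0 ≤ t → 0 ≤ f t) {t : ℝ} (ht : 0 ≤ t) : f t ≤ t • f 1 + f 1 :=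
  calc
    f t ≤ f ⌈t⌉₊ := hadd.monotoneOn hnonneg ht (ht.trans (Nat.le_ceil t)) (Nat.le_ceil t)
    _ = (⌈t⌉₊ : ℝ) • f 1 := by rw [hadd.map_natCast, Nat.cast_smul_eq_nsmul]
    _ ≤ (t + 1) • f 1 :=
      smul_le_smul_of_nonneg_right (Nat.ceil_lt_add_one ht).le (hnonneg 1 zero_le_one)
    _ = t • f 1 + f 1 := by rw [add_smul, one_smul]

theorem smul_one_le_add [SMulPosMono ℝ M] (hadd : AdditiveOnNonneg f)
    (hnonneg : ∀ t, 0 ≤ t → 0 ≤ f t) {t : ℝ} (ht : 0 ≤ t) : t • f 1 ≤ f t + f 1 :=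
  calc
    t • f 1 ≤ ((⌊t⌋₊ : ℝ) + 1) • f 1 :=
      smul_le_smul_of_nonneg_right (Nat.lt_floor_add_one t).le (hnonneg 1 zero_le_one)
    _ = f ⌊t⌋₊ + f 1 := by rw [add_smul, one_smul, Nat.cast_smul_eq_nsmul, hadd.map_natCast]
    _ ≤ f t + f 1 := by
      gcongr
      exact hadd.monotoneOn hnonneg (Set.mem_Ici.mpr (Nat.cast_nonneg _)) ht (Nat.floor_le ht)

-- Applied at `n * t`, the two bounds above show that `n • (f t - t • f 1)` stays within `f 1` of
-- zero, so the error vanishes by the Archimedean property of the order.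
theorem eq_smul_one [IsOrderedModule ℝ M] [TopologicalSpace M] [ContinuousSMul ℝ M]
    [ClosedIciTopology M] (hadd : AdditiveOnNonneg f) (hnonneg : ∀ t, 0 ≤ t → 0 ≤ f t)
    {t : ℝ} (ht : 0 ≤ t) : f t = t • f 1 := by
  have hnt (n : ℕ) : 0 ≤ (n : ℝ) * t := by positivity
  have hsmul (n : ℕ) : ((n : ℝ) * t) • f 1 = n • t • f 1 := by
    rw [mul_smul, Nat.cast_smul_eq_nsmul]
  have hupper (n : ℕ) : n • (f t - t • f 1) ≤ f 1 := by
    rw [nsmul_sub, sub_le_iff_le_add', ← hadd.map_natCast_mul n ht, ← hsmul]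
    exact hadd.le_smul_one_add hnonneg (hnt n)
  have hlower (n : ℕ) : n • (t • f 1 - f t) ≤ f 1 := by
    rw [nsmul_sub, sub_le_iff_le_add', ← hadd.map_natCast_mul n ht, ← hsmul]
    exact hadd.smul_one_le_add hnonneg (hnt n)
  exact le_antisymm (sub_nonpos.mp (nonpos_of_forall_nsmul_le hupper))
    (sub_nonpos.mp (nonpos_of_forall_nsmul_le hlower))

end AdditiveOnNonneg

-- If `0 ≤ x ≤ r`, then `‖r - x‖ ≤ r`; a unital contraction preserves this norm bound, which
-- characterizes positivity of a self-adjoint element.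
theorem map_nonneg_of_map_one_of_norm_map_le {A B : Type*} [CStarAlgebra A] [PartialOrder A]
    [StarOrderedRing A] [CStarAlgebra B] [PartialOrder B] [StarOrderedRing B] (f : A →ₗ[ℝ] B)
    (hone : f 1 = 1) (hstar : ∀ x, f (star x) = star (f x)) (hnorm : ∀ x, ‖f x‖ ≤ ‖x‖)
    {x : A} (hx : 0 ≤ x) : 0 ≤ f x := by
  have hfx : IsSelfAdjoint (f x) := by
    rw [IsSelfAdjoint, ← hstar, hx.isSelfAdjoint.star_eq]
  have hx' : ‖algebraMap ℝ A ‖x‖₊ - x‖₊ ≤ ‖x‖₊ :=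
    (SpectrumRestricts.nnreal_iff_nnnorm hx.isSelfAdjoint le_rfl).mp (.nnreal_of_nonneg hx)
  have hmap : f (algebraMap ℝ A ‖x‖₊ - x) = algebraMap ℝ B ‖x‖₊ - f x := by
    simp only [Algebra.algebraMap_eq_smul_one, map_sub, map_smul, hone]
  refine nonneg_iff_isSelfAdjoint_and_quasispectrumRestricts.mpr ⟨hfx,
    quasispectrumRestricts_iff_spectrumRestricts.mpr
      ((SpectrumRestricts.nnreal_iff_nnnorm hfx (t := ‖x‖₊) (hnorm x)).mpr ?_)⟩
  exact hmap ▸ (hnorm _).trans hx'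

namespace IsCondExp

variable {A : Type*} [CStarAlgebra A] {τ : A →ₗ[ℂ] ℂ} {B : Set A} {E : A →ₗ[ℂ] A}

theorem map_mul_right (hE : IsCondExp τ B E) (hone : (1 : A) ∈ B) (x : A) {b : A} (hb : b ∈ B) :
    E (x * b) = E x * b := by
  simpa using hE.bimodule 1 hone b hb x

theorem map_mul_left (hE : IsCondExp τ B E) (hone : (1 : A) ∈ B) {a : A} (ha : a ∈ B) (x : A) :
    E (a * x) = a * E x := by
  simpa using hE.bimodule a ha 1 hone x

theorem map_nonneg [PartialOrder A] [StarOrderedRing A] (hE : IsCondExp τ B E)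
    (hone : (1 : A) ∈ B) {x : A} (hx : 0 ≤ x) : 0 ≤ E x :=
  map_nonneg_of_map_one_of_norm_map_le (E.restrictScalars ℝ) (hE.map_of_mem 1 hone) hE.map_star
    hE.contractive hx

end IsCondExp

namespace WhiteNoise

variable {A : Type*} [CStarAlgebra A] {τ : A →ₗ[ℂ] ℂ} (W : WhiteNoise A τ)

theorem E_eq_E0_of_mem {a b c d : EReal} (hdisj : Disjoint (Set.Ioo a b) (Set.Ioo c d)) {x : A}
    (hx : x ∈ W.alg c d) : W.E a b x = W.E0 x := by
  rw [← (W.E_condExp c d).map_of_mem x hx, W.indep, W.tower]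
  exact fun r hr ↦ Set.disjoint_left.mp hdisj hr.1 hr.2

theorem E0_mul_of_disjoint {a b c d : EReal} (hdisj : Disjoint (Set.Ioo a b) (Set.Ioo c d))
    {x y : A} (hx : x ∈ W.alg a b) (hy : y ∈ W.alg c d) : W.E0 (x * y) = W.E0 x * W.E0 y :=
  calc
    W.E0 (x * y) = W.E0 (W.E c d (x * y)) := (W.tower c d _).symm
    _ = W.E0 (W.E c d x * y) := by rw [(W.E_condExp c d).map_mul_right (one_mem _) x hy]
    _ = W.E0 (W.E0 x * y) := by rw [W.E_eq_E0_of_mem hdisj.symm hx]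
    _ = W.E0 x * W.E0 y :=
      W.E0_condExp.map_mul_left (one_mem _) (W.E0_condExp.mem_range x) y

theorem S_mem_alg (t : ℝ) {a b : EReal} {x : A} (hx : x ∈ W.alg a b) :
    W.S t x ∈ W.alg (a + t) (b + t) := by
  rw [← SetLike.mem_coe, ← W.S_alg]
  exact Set.mem_image_of_mem _ hx

theorem E0_star_mul_self_S (t : ℝ) (x : A) :
    W.E0 (star (W.S t x) * W.S t x) = W.E0 (star x * x) := by
  rw [← map_star, ← map_mul, W.E0_S]

/-- A centred additive cocycle for the shift of a white noise. Only the values `c t` with `0 ≤ t`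
are meaningful. -/
structure IsCentredCocycle (c : ℝ → A) : Prop where
  mem_alg : ∀ t : ℝ, 0 ≤ t → c t ∈ W.alg 0 t
  map_add_eq : ∀ s t : ℝ, 0 ≤ s → 0 ≤ t → c (s + t) = W.S t (c s) + c t
  E0_eq_zero : ∀ t : ℝ, 0 ≤ t → W.E0 (c t) = 0

namespace IsCentredCocycle

variable {W} {c : ℝ → A}

theorem S_mem_alg (hc : W.IsCentredCocycle c) {s : ℝ} (hs : 0 ≤ s) (t : ℝ) :
    W.S t (c s) ∈ W.alg t (s + t) := by
  simpa only [zero_add] using W.S_mem_alg t (hc.mem_alg s hs)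

theorem E0_star_S_mul (hc : W.IsCentredCocycle c) {s t : ℝ} (hs : 0 ≤ s) (ht : 0 ≤ t) :
    W.E0 (star (W.S t (c s)) * c t) = 0 := by
  have hdisj : Disjoint (Set.Ioo (t : EReal) (s + t)) (Set.Ioo 0 (t : EReal)) :=
    Set.disjoint_left.mpr fun _ h h' ↦ lt_asymm h.1 h'.2
  rw [W.E0_mul_of_disjoint hdisj (star_mem (hc.S_mem_alg hs t)) (hc.mem_alg t ht),
    hc.E0_eq_zero t ht, mul_zero]

theorem E0_star_mul_S (hc : W.IsCentredCocycle c) {s t : ℝ} (hs : 0 ≤ s) (ht : 0 ≤ t) :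
    W.E0 (star (c t) * W.S t (c s)) = 0 := by
  rw [← star_eq_zero, ← W.E0_condExp.map_star, star_mul, star_star, hc.E0_star_S_mul hs ht]

theorem additiveOnNonneg_E0_star_mul_self (hc : W.IsCentredCocycle c) :
    AdditiveOnNonneg fun t ↦ W.E0 (star (c t) * c t) := by
  intro s t hs ht
  simp only [hc.map_add_eq s t hs ht, star_add, add_mul, mul_add, map_add,
    hc.E0_star_S_mul hs ht, hc.E0_star_mul_S hs ht, W.E0_star_mul_self_S, add_zero, zero_add]

theorem E0_star_mul_self (hc : W.IsCentredCocycle c) {t : ℝ} (ht : 0 ≤ t) :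
    W.E0 (star (c t) * c t) = t • W.E0 (star (c 1) * c 1) := by
  let _ := CStarAlgebra.spectralOrder A
  let _ := CStarAlgebra.spectralOrderedRing A
  exact hc.additiveOnNonneg_E0_star_mul_self.eq_smul_one
    (fun _ _ ↦ W.E0_condExp.map_nonneg (one_mem _) (star_mul_self_nonneg _)) ht

theorem sub_eq_S (hc : W.IsCentredCocycle c) {s t : ℝ} (hs : 0 ≤ s) (hst : s ≤ t) :
    c t - c s = W.S s (c (t - s)) := by
  rw [sub_eq_iff_eq_add, ← hc.map_add_eq (t - s) s (sub_nonneg.mpr hst) hs, sub_add_cancel]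

theorem E0_star_sub_mul_sub (hc : W.IsCentredCocycle c) {s t : ℝ} (hs : 0 ≤ s) (hst : s ≤ t) :
    W.E0 (star (c t - c s) * (c t - c s)) = (t - s) • W.E0 (star (c 1) * c 1) := by
  rw [hc.sub_eq_S hs hst, W.E0_star_mul_self_S, hc.E0_star_mul_self (sub_nonneg.mpr hst)]

end IsCentredCocycle

end WhiteNoise

theorem condExp_discrete_quadratic_variation_general {A : Type*} [CStarAlgebra A]
    {τ : A →ₗ[ℂ] ℂ} {W : WhiteNoise A τ} {c : ℝ → A} (hc : W.IsCentredCocycle c)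
    {n : ℕ} {s : ℕ → ℝ} (hs0 : 0 ≤ s 0) (hs : MonotoneOn s (Set.Iic n)) :
    ∑ j ∈ Finset.range n,
        W.E0 (star (c (s (j + 1)) - c (s j)) * (c (s (j + 1)) - c (s j))) =
      (s n - s 0) • W.E0 (star (c 1) * c 1) := by
  have hincr (j : ℕ) (hj : j ∈ Finset.range n) :
      W.E0 (star (c (s (j + 1)) - c (s j)) * (c (s (j + 1)) - c (s j))) =
        (s (j + 1) - s j) • W.E0 (star (c 1) * c 1) := by
    have hjn : j < n := Finset.mem_range.mp hj
    exact hc.E0_star_sub_mul_sub (hs0.trans (hs (Nat.zero_le n) hjn.le (Nat.zero_le j)))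
      (hs hjn.le hjn (Nat.le_succ j))
  rw [Finset.sum_congr rfl hincr, ← Finset.sum_smul, Finset.sum_range_sub]

/-- For a centred norm-continuous additive cocycle `c` and any partition
`0 = s_0 < … < s_n = t` of `[0, t]`, the conditional expectation of the discrete quadratic
variation sum equals `t • E₀(c_1* c_1)`, independently of the partition. -/
theorem condExp_discrete_quadratic_variation {A : Type*} [CStarAlgebra A]
    (τ : A →ₗ[ℂ] ℂ) (W : WhiteNoise A τ) (c : ℝ → A)
    (hadapt : ∀ t : ℝ, 0 ≤ t → c t ∈ W.alg 0 (t : EReal))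
    (hcoc : ∀ s t : ℝ, 0 ≤ s → 0 ≤ t → c (s + t) = W.S t (c s) + c t)
    (hcentred : ∀ t : ℝ, 0 ≤ t → W.E0 (c t) = 0)
    (hcont : ContinuousOn c (Set.Ici 0)) :
    ∀ t : ℝ, 0 ≤ t → ∀ (n : ℕ), 1 ≤ n → ∀ s : ℕ → ℝ,
      s 0 = 0 → s n = t → (∀ j < n, s j < s (j + 1)) →
      ∑ j ∈ Finset.range n,
          W.E0 (star (c (s (j + 1)) - c (s j)) * (c (s (j + 1)) - c (s j))) =
        (t : ℂ) • W.E0 (star (c 1) * c 1) := by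
  intro t _ n _ s hs0 hsn hs
  have hmono : MonotoneOn s (Set.Iic n) :=
    monotoneOn_of_le_add_one Set.ordConnected_Iic fun j _ _ hj ↦ (hs j hj).le
  simpa only [hs0, hsn, sub_zero, Complex.coe_smul] using
    condExp_discrete_quadratic_variation_general ⟨hadapt, hcoc, hcentred⟩ hs0.ge hmono
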